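/- Let 0 ≤ α < 2/3 and λ ≥ 1. If ν/λ ≪ 1 (ν fixed or small relative to λ) then ‖H_ν(λ·)‖²_{L²([1,1+λ^{−α}])} ≲ λ^{−1−α}; and if ε₀ ≤ c := ν/λ ≤ 1 − ε₀ for some fixed ε₀ ∈ (0,1), then ‖H_ν(λ·)‖²_{L²([1,1+λ^{−α}])} ≃ (1/(πλ)) · λ^{−α} / ((1 − c² + λ^{−α})^{1/2} + (1 − c²)^{1/2}), uniformly in ν and λ. -/

import Mathlib

noncomputable section

open Real Complex Filter

/-- `H` is the Hankel function of the first kind of order `ν`, viewed on `(0,∞)`: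
it is a (twice continuously differentiable) solution of the Bessel equation
`z²y'' + zy' + (z² - ν²)y = 0` with the outgoing asymptotic behaviour
`H(z) ~ (2/(πz))^{1/2} e^{i(z - πν/2 - π/4)}` as `z → ∞`, which characterizes it
uniquely among solutions of the Bessel equation. Its real and imaginary parts are
the Bessel functions `J_ν` and `Y_ν`. -/
structure IsHankel (ν : ℝ) (H : ℝ → ℂ) : Prop where
  smooth : ContDiffOn ℝ 2 H (Set.Ioi 0)
  ode : ∀ z : ℝ, 0 < z →
    (z:ℂ)^2 * deriv (deriv H) z + (z:ℂ) * deriv H z + ((z:ℂ)^2 - (ν:ℂ)^2) * H z = 0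
  outgoing : Tendsto
    (fun z : ℝ => H z /
      ((Real.sqrt (2 / (π * z)) : ℂ) * Complex.exp (Complex.I * ((z:ℂ) - π*ν/2 - π/4))))
    atTop (nhds 1)

/-!
Liouville's substitution `u = √z H_ν z` turns the Bessel equation into `u'' + q u = 0` with
`q = 1 - (ν² - 1/4) / z²`, a potential that is monotone and tends to `1`. Both `‖u‖²` and `‖u'‖²`
tend to `‖a‖² = 2/π`. Monotonicity of the energy `‖u'‖² + q ‖u‖²`, divided by `q` when `q`
decreases, bounds it by its limiting value, hence `‖u‖²` from above; conservation of the
Wronskian `Im (ū u') = ‖a‖²` together with the resulting bound on `u'` bounds `‖u‖²` from below.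
So `z ‖H_ν z‖²` is comparable to `1` as long as `ν / z` stays below and away from `1`, and
integrating this over the layer gives both estimates, the square roots in the second being
comparable to constants.
-/

open MeasureTheory
open scoped Topology ComplexConjugate

section Calculus

variable {b : ℝ}

lemma le_of_hasDerivAt_nonneg_of_tendsto {f f' : ℝ → ℝ} {L : ℝ}
    (hf : ∀ z > b, HasDerivAt f (f' z) z) (hf' : ∀ z > b, 0 ≤ f' z)
    (hL : Tendsto f atTop (𝓝 L)) {z : ℝ} (hz : b < z) : f z ≤ L := by
  have hmono : MonotoneOn f (Set.Ioi b) :=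
    monotoneOn_of_hasDerivWithinAt_nonneg (convex_Ioi b)
      (fun x hx => (hf x hx).continuousAt.continuousWithinAt)
      (fun x hx => (hf x (interior_subset hx)).hasDerivWithinAt)
      (fun x hx => hf' x (interior_subset hx))
  refine ge_of_tendsto hL ?_
  filter_upwards [eventually_ge_atTop z] with y hy
  exact hmono hz (hz.trans_le hy) hy

lemma eq_of_hasDerivAt_zero_of_tendsto {f : ℝ → ℝ} {L : ℝ}
    (hf : ∀ z > b, HasDerivAt f 0 z) (hL : Tendsto f atTop (𝓝 L)) {z : ℝ} (hz : b < z) :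
    f z = L := by
  refine le_antisymm
    (le_of_hasDerivAt_nonneg_of_tendsto hf (fun _ _ => le_rfl) hL hz) (neg_le_neg_iff.1 ?_)
  exact le_of_hasDerivAt_nonneg_of_tendsto (f := fun z => -f z) (fun z hz => (hf z hz).neg)
    (fun _ _ => by simp) hL.neg hz

variable {E : Type*} [NormedAddCommGroup E] [NormedSpace ℝ E]

/- A variant of Barbalat's lemma: on `[z, z + 1]` the function `g` is nearly constant, so the
increment `f (z + 1) - f z`, which tends to zero, is nearly `g z`. -/
lemma tendsto_zero_of_hasDerivAt_add {f g g' h : ℝ → E} {a : E}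
    (hf : ∀ z > b, HasDerivAt f (g z + h z) z) (hg : ∀ z > b, HasDerivAt g (g' z) z)
    (hfa : Tendsto f atTop (𝓝 a)) (hg' : Tendsto g' atTop (𝓝 0))
    (hh : Tendsto h atTop (𝓝 0)) : Tendsto g atTop (𝓝 0) := by
  rw [NormedAddGroup.tendsto_nhds_zero]
  intro ε hε
  have hincr : Tendsto (fun z => f (z + 1) - f z) atTop (𝓝 0) := by
    simpa using (hfa.comp (tendsto_atTop_add_const_right _ 1 tendsto_id)).sub hfa
  have hsmall : ∀ {k : ℝ → E}, Tendsto k atTop (𝓝 0) → ∀ᶠ z in atTop, ‖k z‖ < ε / 3 :=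
    fun hk => NormedAddGroup.tendsto_nhds_zero.1 hk (ε / 3) (by positivity)
  filter_upwards [hsmall hincr, eventually_forall_ge_atTop.2 (hsmall hg'),
    eventually_forall_ge_atTop.2 (hsmall hh), eventually_gt_atTop b] with z hincr_z hg'_z hh_z hz
  have hosc : ∀ y ∈ Set.Icc z (z + 1), ‖g y - g z‖ ≤ ε / 3 := fun y hy =>
    (norm_image_sub_le_of_norm_deriv_le_segment'
      (fun x hx => (hg x (hz.trans_le hx.1)).hasDerivWithinAt)
      (fun x hx => (hg'_z x hx.1).le) y hy).trans
      (mul_le_of_le_one_right (by positivity) (by linarith [hy.2]))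
  have hlin : ‖f (z + 1) - f z - g z‖ ≤ 2 * ε / 3 := by
    have hmvt := norm_image_sub_le_of_norm_deriv_le_segment' (f := fun y => f y - (y - z) • g z)
      (f' := fun y => g y + h y - (1 : ℝ) • g z) (a := z) (b := z + 1) (C := 2 * ε / 3)
      (fun y hy => ((hf y (hz.trans_le hy.1)).sub
        (((hasDerivAt_id y).sub_const z).smul_const (g z))).hasDerivWithinAt)
      (fun y hy => by
        calc ‖g y + h y - (1 : ℝ) • g z‖ = ‖(g y - g z) + h y‖ := by
              rw [one_smul]; congr 1; abel
          _ ≤ ‖g y - g z‖ + ‖h y‖ := norm_add_le _ _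
          _ ≤ 2 * ε / 3 := by
              linarith [hosc y (Set.Ico_subset_Icc_self hy), hh_z y hy.1])
      (z + 1) ⟨by linarith, le_rfl⟩
    simpa [sub_right_comm] using hmvt
  calc ‖g z‖ = ‖(f (z + 1) - f z) - (f (z + 1) - f z - g z)‖ := by rw [sub_sub_cancel]
    _ ≤ ‖f (z + 1) - f z‖ + ‖f (z + 1) - f z - g z‖ := norm_sub_le _ _
    _ < ε := by linarith

end Calculus

lemma hasDerivAt_cexp_neg_I_mul (z : ℝ) :
    HasDerivAt (fun z : ℝ => Complex.exp (-(I * z))) (-I * Complex.exp (-(I * z))) z := by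
  have := ((hasDerivAt_id z).ofReal_comp.const_mul I).neg.cexp
  simpa [mul_comm] using this

lemma norm_cexp_neg_I_mul (z : ℝ) : ‖Complex.exp (-(I * z))‖ = 1 := by
  simp [Complex.norm_exp]

/-- `u` is a solution on `(b, ∞)` of the Schrödinger equation `u'' + q u = 0` with the outgoing
behaviour `u z ~ a e^{iz}` at infinity. The derivative `u'` is part of the data, so that the
equation is a first-order condition on `u'`. -/
structure IsOutgoingSolution (b : ℝ) (q : ℝ → ℝ) (u u' : ℝ → ℂ) (a : ℂ) : Prop where
  hasDerivAt : ∀ z > b, HasDerivAt u (u' z) z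
  hasDerivAt_deriv : ∀ z > b, HasDerivAt u' (-(q z : ℂ) * u z) z
  tendsto : Tendsto (fun z : ℝ => Complex.exp (-(I * z)) * u z) atTop (𝓝 a)

namespace IsOutgoingSolution

variable {b : ℝ} {q q' : ℝ → ℝ} {u u' : ℝ → ℂ} {a : ℂ}

/- With `v = e^{-iz} u` and `s = e^{-iz} (u' + i u)` one has `v' = s - 2 i v`
and `s' = (1 - q) v → 0`. -/
lemma tendsto_deriv (h : IsOutgoingSolution b q u u' a) (hq : Tendsto q atTop (𝓝 1)) :
    Tendsto (fun z : ℝ => Complex.exp (-(I * z)) * u' z) atTop (𝓝 (I * a)) := by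
  set v : ℝ → ℂ := fun z => Complex.exp (-(I * z)) * u z with hv
  set s : ℝ → ℂ := fun z => Complex.exp (-(I * z)) * (u' z + I * u z) with hs
  have hv' : ∀ z > b, HasDerivAt v ((s z - 2 * I * a) + -(2 * I) * (v z - a)) z := fun z hz =>
    ((hasDerivAt_cexp_neg_I_mul z).mul (h.hasDerivAt z hz)).congr_deriv (by
      simp only [hv, hs]; ring)
  have hs' : ∀ z > b, HasDerivAt (fun z => s z - 2 * I * a) ((1 - q z : ℂ) * v z) z :=
    fun z hz => (((hasDerivAt_cexp_neg_I_mul z).mul ((h.hasDerivAt_deriv z hz).add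
      ((h.hasDerivAt z hz).const_mul I))).sub_const _).congr_deriv (by
        simp only [hv, Pi.add_apply]
        linear_combination (-Complex.exp (-(I * z)) * u z) * I_mul_I)
  have hs'_lim : Tendsto (fun z => (1 - q z : ℂ) * v z) atTop (𝓝 0) := by
    simpa using ((continuous_ofReal.tendsto _).comp hq).const_sub 1 |>.mul h.tendsto
  have hv_lim : Tendsto (fun z => -(2 * I) * (v z - a)) atTop (𝓝 0) := by
    simpa using (h.tendsto.sub_const a).const_mul (-(2 * I))
  have hs_lim := tendsto_zero_of_hasDerivAt_add hv' hs' h.tendsto hs'_lim hv_lim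
  have := (hs_lim.add_const (2 * I * a)).sub (h.tendsto.const_mul I)
  rw [show 0 + 2 * I * a - I * a = I * a by ring] at this
  refine this.congr fun z => ?_
  simp only [hs]
  ring

lemma tendsto_norm_sq (h : IsOutgoingSolution b q u u' a) :
    Tendsto (fun z => ‖u z‖ ^ 2) atTop (𝓝 (‖a‖ ^ 2)) := by
  simpa [norm_cexp_neg_I_mul] using h.tendsto.norm.pow 2

lemma tendsto_norm_sq_deriv (h : IsOutgoingSolution b q u u' a)
    (hq : Tendsto q atTop (𝓝 1)) : Tendsto (fun z => ‖u' z‖ ^ 2) atTop (𝓝 (‖a‖ ^ 2)) := by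
  simpa [norm_cexp_neg_I_mul] using (h.tendsto_deriv hq).norm.pow 2

lemma im_conj_mul_deriv_eq (h : IsOutgoingSolution b q u u' a)
    (hq : Tendsto q atTop (𝓝 1)) {z : ℝ} (hz : b < z) : (conj (u z) * u' z).im = ‖a‖ ^ 2 := by
  refine eq_of_hasDerivAt_zero_of_tendsto (f := fun z => (conj (u z) * u' z).im) ?_ ?_ hz
  · intro z hz
    refine (imCLM.hasFDerivAt.comp_hasDerivAt z
      ((h.hasDerivAt z hz).star.mul (h.hasDerivAt_deriv z hz))).congr_deriv ?_
    simp
    ring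
  · have hlim : Tendsto (fun z => conj (u z) * u' z) atTop (𝓝 (conj a * (I * a))) := by
      refine (((continuous_conj.tendsto a).comp h.tendsto).mul (h.tendsto_deriv hq)).congr
        fun z => ?_
      have hexp : conj (Complex.exp (-(I * z))) * Complex.exp (-(I * z)) = 1 := by
        rw [conj_mul', norm_cexp_neg_I_mul]; simp
      simp only [Function.comp_apply, map_mul]
      linear_combination (conj (u z) * u' z) * hexp
    have him : (conj a * (I * a)).im = ‖a‖ ^ 2 := by
      rw [mul_left_comm, conj_mul', ← ofReal_pow, I_mul_im, ofReal_re]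
    exact him ▸ (continuous_im.tendsto _).comp hlim

lemma sq_norm_le_norm_mul_norm_deriv (h : IsOutgoingSolution b q u u' a)
    (hq : Tendsto q atTop (𝓝 1)) {z : ℝ} (hz : b < z) : ‖a‖ ^ 2 ≤ ‖u z‖ * ‖u' z‖ := by
  simpa [h.im_conj_mul_deriv_eq hq hz] using
    (le_abs_self _).trans (abs_im_le_norm (conj (u z) * u' z))

lemma hasDerivAt_energy (h : IsOutgoingSolution b q u u' a) {z : ℝ} (hz : b < z)
    (hq' : HasDerivAt q (q' z) z) :
    HasDerivAt (fun z => ‖u' z‖ ^ 2 + q z * ‖u z‖ ^ 2) (q' z * ‖u z‖ ^ 2) z := by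
  refine ((h.hasDerivAt_deriv z hz).norm_sq.add
    (hq'.mul (h.hasDerivAt z hz).norm_sq)).congr_deriv ?_
  simp only [Complex.inner, mul_re, mul_im, neg_re, neg_im, ofReal_re, ofReal_im, conj_re,
    conj_im]
  ring

lemma tendsto_energy (h : IsOutgoingSolution b q u u' a) (hq : Tendsto q atTop (𝓝 1)) :
    Tendsto (fun z => ‖u' z‖ ^ 2 + q z * ‖u z‖ ^ 2) atTop (𝓝 (2 * ‖a‖ ^ 2)) := by
  simpa [two_mul] using (h.tendsto_norm_sq_deriv hq).add (hq.mul h.tendsto_norm_sq)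

/- For increasing `q` the energy `‖u'‖² + q ‖u‖²` increases to its limit; for decreasing `q`
the quotient of the energy by `q` does. -/
lemma energy_le (h : IsOutgoingSolution b q u u' a) (hq : Tendsto q atTop (𝓝 1))
    (hq' : ∀ z > b, HasDerivAt q (q' z) z)
    (hmono : (∀ z > b, 0 ≤ q' z) ∨ (∀ z > b, q' z ≤ 0)) {z : ℝ} (hz : b < z) :
    ‖u' z‖ ^ 2 + q z * ‖u z‖ ^ 2 ≤ 2 * ‖a‖ ^ 2 * max 1 (q z) := by
  have hlim := h.tendsto_energy hq
  rcases hmono with hincr | hdecr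
  · calc ‖u' z‖ ^ 2 + q z * ‖u z‖ ^ 2 ≤ 2 * ‖a‖ ^ 2 :=
          le_of_hasDerivAt_nonneg_of_tendsto (fun z hz => h.hasDerivAt_energy hz (hq' z hz))
            (fun z hz => mul_nonneg (hincr z hz) (by positivity)) hlim hz
      _ ≤ 2 * ‖a‖ ^ 2 * max 1 (q z) := le_mul_of_one_le_right (by positivity) (le_max_left _ _)
  · have one_le : ∀ z > b, 1 ≤ q z := fun z hz => neg_le_neg_iff.1 <|
      le_of_hasDerivAt_nonneg_of_tendsto (f := fun z => -q z) (fun z hz => (hq' z hz).neg)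
        (fun z hz => neg_nonneg.2 (hdecr z hz)) hq.neg hz
    have hquot : (‖u' z‖ ^ 2 + q z * ‖u z‖ ^ 2) / q z ≤ 2 * ‖a‖ ^ 2 / 1 :=
      le_of_hasDerivAt_nonneg_of_tendsto
        (fun z hz => (h.hasDerivAt_energy hz (hq' z hz)).div (hq' z hz)
          (zero_lt_one.trans_le (one_le z hz)).ne')
        (fun z hz => div_nonneg
          (by nlinarith [mul_nonneg (neg_nonneg.2 (hdecr z hz)) (sq_nonneg ‖u' z‖)])
          (sq_nonneg _))
        (hlim.div hq one_ne_zero) hz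
    rw [max_eq_right (one_le z hz)]
    rwa [div_one, div_le_iff₀ (zero_lt_one.trans_le (one_le z hz))] at hquot

lemma min_mul_sq_norm_le (h : IsOutgoingSolution b q u u' a) (hq : Tendsto q atTop (𝓝 1))
    (hq' : ∀ z > b, HasDerivAt q (q' z) z)
    (hmono : (∀ z > b, 0 ≤ q' z) ∨ (∀ z > b, q' z ≤ 0)) {z : ℝ} (hz : b < z) :
    min 1 (q z) * ‖u z‖ ^ 2 ≤ 2 * ‖a‖ ^ 2 := by
  have hmax : 0 < max 1 (q z) := lt_max_of_lt_left one_pos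
  refine le_of_mul_le_mul_right ?_ hmax
  calc min 1 (q z) * ‖u z‖ ^ 2 * max 1 (q z)
      = q z * ‖u z‖ ^ 2 := by rw [mul_right_comm, min_mul_max, one_mul]
    _ ≤ ‖u' z‖ ^ 2 + q z * ‖u z‖ ^ 2 := le_add_of_nonneg_left (by positivity)
    _ ≤ 2 * ‖a‖ ^ 2 * max 1 (q z) := h.energy_le hq hq' hmono hz

lemma sq_norm_le_max_mul (h : IsOutgoingSolution b q u u' a) (hq : Tendsto q atTop (𝓝 1))
    (hq' : ∀ z > b, HasDerivAt q (q' z) z)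
    (hmono : (∀ z > b, 0 ≤ q' z) ∨ (∀ z > b, q' z ≤ 0)) {z : ℝ} (hz : b < z) (hqz : 0 ≤ q z) :
    ‖a‖ ^ 2 ≤ 2 * max 1 (q z) * ‖u z‖ ^ 2 := by
  rcases (sq_nonneg ‖a‖).eq_or_lt with ha | ha
  · rw [← ha]; positivity
  have hu' : ‖u' z‖ ^ 2 ≤ 2 * ‖a‖ ^ 2 * max 1 (q z) :=
    (le_add_of_nonneg_right (by positivity)).trans (h.energy_le hq hq' hmono hz)
  refine le_of_mul_le_mul_right ?_ ha
  calc ‖a‖ ^ 2 * ‖a‖ ^ 2 ≤ (‖u z‖ * ‖u' z‖) * (‖u z‖ * ‖u' z‖) := by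
        gcongr <;> exact h.sq_norm_le_norm_mul_norm_deriv hq hz
    _ = ‖u z‖ ^ 2 * ‖u' z‖ ^ 2 := by ring
    _ ≤ ‖u z‖ ^ 2 * (2 * ‖a‖ ^ 2 * max 1 (q z)) := by gcongr
    _ = 2 * max 1 (q z) * ‖u z‖ ^ 2 * ‖a‖ ^ 2 := by ring

end IsOutgoingSolution

/-- The potential `q` of the Liouville normal form `u'' + q u = 0`, `u = √z y`, of the Bessel
equation of order `ν` for `y`. -/
def besselPotential (ν z : ℝ) : ℝ := 1 - (ν ^ 2 - 1 / 4) / z ^ 2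

section besselPotential

variable {ν z : ℝ}

lemma tendsto_besselPotential (ν : ℝ) : Tendsto (besselPotential ν) atTop (𝓝 1) := by
  have hlim : Tendsto (fun z : ℝ => 1 - (ν ^ 2 - 1 / 4) / z ^ 2) atTop (𝓝 (1 - 0)) :=
    (tendsto_const_nhds.div_atTop (tendsto_pow_atTop two_ne_zero)).const_sub 1
  rwa [sub_zero] at hlim

lemma hasDerivAt_besselPotential (hz : 0 < z) :
    HasDerivAt (besselPotential ν) (2 * (ν ^ 2 - 1 / 4) / z ^ 3) z := by
  refine (((hasDerivAt_const z (ν ^ 2 - 1 / 4)).div (hasDerivAt_pow 2 z)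
    (by positivity)).const_sub 1).congr_deriv ?_
  field_simp
  push_cast
  ring

lemma besselPotential_deriv_nonneg_or_nonpos (ν : ℝ) :
    (∀ z > 0, 0 ≤ 2 * (ν ^ 2 - 1 / 4) / z ^ 3) ∨ (∀ z > 0, 2 * (ν ^ 2 - 1 / 4) / z ^ 3 ≤ 0) := by
  refine (le_total 0 (ν ^ 2 - 1 / 4)).imp (fun hμ z hz => ?_) (fun hμ z hz => ?_)
  · positivity
  · exact div_nonpos_of_nonpos_of_nonneg (by linarith) (by positivity)

lemma besselPotential_eq_add (hz : 0 < z) :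
    besselPotential ν z = 1 - (ν / z) ^ 2 + 1 / (4 * z ^ 2) := by
  unfold besselPotential
  field_simp
  ring

end besselPotential

section SquareRoot

variable {z : ℝ}

lemma hasDerivAt_ofReal_sqrt (hz : 0 < z) :
    HasDerivAt (fun z : ℝ => (√z : ℂ)) (1 / (2 * √z) : ℂ) z := by
  simpa using (Real.hasDerivAt_sqrt hz.ne').ofReal_comp

lemma hasDerivAt_one_div_ofReal_sqrt (hz : 0 < z) :
    HasDerivAt (fun z : ℝ => (1 / (2 * √z) : ℂ)) (-(1 / (4 * √z ^ 3)) : ℂ) z := by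
  have hs : (√z : ℂ) ≠ 0 := ofReal_ne_zero.2 (Real.sqrt_pos.2 hz).ne'
  refine ((hasDerivAt_const z (1 : ℂ)).div ((hasDerivAt_ofReal_sqrt hz).const_mul 2)
    (mul_ne_zero two_ne_zero hs)).congr_deriv ?_
  field_simp
  ring

lemma norm_ofReal_sqrt_mul_sq (hz : 0 ≤ z) (w : ℂ) : ‖(√z : ℂ) * w‖ ^ 2 = z * ‖w‖ ^ 2 := by
  rw [norm_mul, mul_pow, norm_real, Real.norm_eq_abs, sq_abs, Real.sq_sqrt hz]

end SquareRoot

/-- The amplitude of the outgoing wave `√z H_ν z ~ a e^{iz}`. -/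
def hankelAmplitude (ν : ℝ) : ℂ := (√(2 / π) : ℂ) * Complex.exp (-(π * ν / 2 + π / 4 : ℝ) * I)

lemma norm_hankelAmplitude_sq (ν : ℝ) : ‖hankelAmplitude ν‖ ^ 2 = 2 / π := by
  rw [hankelAmplitude, norm_mul, ← ofReal_neg, norm_exp_ofReal_mul_I, mul_one, norm_real,
    Real.norm_eq_abs, sq_abs, Real.sq_sqrt (by positivity)]

lemma hankelAmplitude_ne_zero (ν : ℝ) : hankelAmplitude ν ≠ 0 := by
  rw [← norm_ne_zero_iff, ← sq_pos_iff, norm_hankelAmplitude_sq]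
  positivity

lemma sqrt_mul_cexp_eq_hankelAmplitude_mul {ν z : ℝ} (hz : 0 < z) :
    (√z : ℂ) * ((√(2 / (π * z)) : ℂ) * Complex.exp (I * ((z : ℂ) - π * ν / 2 - π / 4))) =
      hankelAmplitude ν * Complex.exp (I * z) := by
  have hsqrt : √z * √(2 / (π * z)) = √(2 / π) := by
    rw [← Real.sqrt_mul hz.le]
    congr 1
    field_simp
  rw [← mul_assoc, ← ofReal_mul, hsqrt, hankelAmplitude, mul_assoc, ← Complex.exp_add]
  congr 2
  push_cast
  ring

namespace IsHankel

variable {ν : ℝ} {H : ℝ → ℂ}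

lemma hasDerivAt (hH : IsHankel ν H) {z : ℝ} (hz : 0 < z) : HasDerivAt H (deriv H z) z :=
  ((hH.smooth.differentiableOn two_ne_zero).differentiableAt (Ioi_mem_nhds hz)).hasDerivAt

lemma hasDerivAt_deriv (hH : IsHankel ν H) {z : ℝ} (hz : 0 < z) :
    HasDerivAt (deriv H) (deriv (deriv H) z) z :=
  (((hH.smooth.deriv_of_isOpen (m := 1) isOpen_Ioi (by norm_num)).differentiableOn
    one_ne_zero).differentiableAt (Ioi_mem_nhds hz)).hasDerivAt

lemma tendsto_cexp_mul_sqrt_mul (hH : IsHankel ν H) :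
    Tendsto (fun z : ℝ => Complex.exp (-(I * z)) * (√z * H z)) atTop (𝓝 (hankelAmplitude ν)) := by
  have hlim := hH.outgoing.mul_const (hankelAmplitude ν)
  rw [one_mul] at hlim
  refine hlim.congr' ?_
  filter_upwards [eventually_gt_atTop 0] with z hz
  have hnz := mul_ne_zero (hankelAmplitude_ne_zero ν) (Complex.exp_ne_zero (I * z))
  have hwave := sqrt_mul_cexp_eq_hankelAmplitude_mul (ν := ν) hz
  rw [← hwave] at hnz
  rw [Complex.exp_neg, div_mul_eq_mul_div, div_eq_iff (right_ne_zero_of_mul hnz)]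
  linear_combination (-(Complex.exp (I * z))⁻¹ * H z) * hwave -
    H z * hankelAmplitude ν * inv_mul_cancel₀ (Complex.exp_ne_zero (I * z))

lemma isOutgoingSolution (hH : IsHankel ν H) :
    IsOutgoingSolution 0 (besselPotential ν) (fun z => √z * H z)
      (fun z => 1 / (2 * √z) * H z + √z * deriv H z) (hankelAmplitude ν) where
  hasDerivAt z hz := (hasDerivAt_ofReal_sqrt hz).mul (hH.hasDerivAt hz)
  hasDerivAt_deriv z hz := by
    refine (((hasDerivAt_one_div_ofReal_sqrt hz).mul (hH.hasDerivAt hz)).add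
      ((hasDerivAt_ofReal_sqrt hz).mul (hH.hasDerivAt_deriv hz))).congr_deriv ?_
    have hs : (√z : ℂ) ≠ 0 := ofReal_ne_zero.2 (Real.sqrt_pos.2 hz).ne'
    have hsq : (z : ℂ) = (√z : ℂ) ^ 2 := by exact_mod_cast (Real.sq_sqrt (le_of_lt hz)).symm
    have hode := hH.ode z hz
    simp only [besselPotential]
    push_cast
    rw [hsq] at hode ⊢
    field_simp
    linear_combination 8 * hode
  tendsto := hH.tendsto_cexp_mul_sqrt_mul

lemma one_sub_sq_mul_norm_sq_le (hH : IsHankel ν H) {z : ℝ} (hz : 0 < z) :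
    (1 - (ν / z) ^ 2) * (z * ‖H z‖ ^ 2) ≤ 4 / π := by
  have hmin : 1 - (ν / z) ^ 2 ≤ min 1 (besselPotential ν z) := by
    rw [besselPotential_eq_add hz]
    exact le_min (sub_le_self _ (sq_nonneg _)) (le_add_of_nonneg_right (by positivity))
  calc (1 - (ν / z) ^ 2) * (z * ‖H z‖ ^ 2)
      ≤ min 1 (besselPotential ν z) * (z * ‖H z‖ ^ 2) := by gcongr
    _ ≤ 2 * ‖hankelAmplitude ν‖ ^ 2 := norm_ofReal_sqrt_mul_sq hz.le (H z) ▸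
        hH.isOutgoingSolution.min_mul_sq_norm_le (tendsto_besselPotential ν)
          (fun _ => hasDerivAt_besselPotential) (besselPotential_deriv_nonneg_or_nonpos ν) hz
    _ = 4 / π := by rw [norm_hankelAmplitude_sq]; ring

lemma one_div_pi_le_mul_norm_sq (hH : IsHankel ν H) {z : ℝ} (hz : 0 < z) (hνz : |ν / z| ≤ 1) :
    1 / π ≤ (1 + 1 / (4 * z ^ 2)) * (z * ‖H z‖ ^ 2) := by
  have hc : (ν / z) ^ 2 ≤ 1 := (sq_le_one_iff_abs_le_one _).2 hνz
  have hpos : 0 ≤ 1 / (4 * z ^ 2) := by positivity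
  have hq : 0 ≤ besselPotential ν z := by
    rw [besselPotential_eq_add hz]; linarith
  have hmax : max 1 (besselPotential ν z) ≤ 1 + 1 / (4 * z ^ 2) := by
    rw [besselPotential_eq_add hz]
    exact max_le (by linarith) (by linarith [sq_nonneg (ν / z)])
  calc 1 / π = ‖hankelAmplitude ν‖ ^ 2 / 2 := by rw [norm_hankelAmplitude_sq]; ring
    _ ≤ 2 * max 1 (besselPotential ν z) * (z * ‖H z‖ ^ 2) / 2 := by
        gcongr
        exact norm_ofReal_sqrt_mul_sq hz.le (H z) ▸
          hH.isOutgoingSolution.sq_norm_le_max_mul (tendsto_besselPotential ν)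
            (fun _ => hasDerivAt_besselPotential) (besselPotential_deriv_nonneg_or_nonpos ν) hz hq
    _ = max 1 (besselPotential ν z) * (z * ‖H z‖ ^ 2) := by ring
    _ ≤ (1 + 1 / (4 * z ^ 2)) * (z * ‖H z‖ ^ 2) := by gcongr

end IsHankel

section Layer

variable {ν lam h : ℝ} {H : ℝ → ℂ}

lemma setIntegral_Icc_one_const (hh : 0 ≤ h) (c : ℝ) :
    ∫ _ in Set.Icc (1 : ℝ) (1 + h), c = c * h := by
  simp [measureReal_def, hh, mul_comm]

namespace IsHankel

lemma integrableOn_norm_sq (hH : IsHankel ν H) (hlam : 0 < lam) :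
    IntegrableOn (fun r => ‖H (lam * r)‖ ^ 2) (Set.Icc 1 (1 + h)) := by
  have hmaps : Set.MapsTo (fun r => lam * r) (Set.Icc 1 (1 + h)) (Set.Ioi 0) :=
    fun r hr => mul_pos hlam (zero_lt_one.trans_le hr.1)
  exact ((hH.smooth.continuousOn.comp (by fun_prop) hmaps).norm.pow 2).integrableOn_Icc

lemma setIntegral_norm_sq_le (hH : IsHankel ν H) (hlam : 0 < lam) (hν : |ν / lam| < 1)
    (hh : 0 ≤ h) :
    ∫ r in Set.Icc 1 (1 + h), ‖H (lam * r)‖ ^ 2 ≤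
      4 / (1 - (ν / lam) ^ 2) * (1 / (π * lam) * h) := by
  have hc : 0 < 1 - (ν / lam) ^ 2 := sub_pos.2 ((sq_lt_one_iff_abs_lt_one _).2 hν)
  have hpoint : ∀ r ∈ Set.Icc 1 (1 + h),
      ‖H (lam * r)‖ ^ 2 ≤ 4 / (1 - (ν / lam) ^ 2) * (1 / (π * lam)) := by
    intro r ⟨hr, _⟩
    have hmono : (ν / (lam * r)) ^ 2 ≤ (ν / lam) ^ 2 := by
      rw [← div_div, div_pow]
      exact div_le_self (sq_nonneg _) (one_le_pow₀ hr)
    have hscaled : (1 - (ν / lam) ^ 2) * (lam * ‖H (lam * r)‖ ^ 2) ≤ 4 / π :=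
      calc (1 - (ν / lam) ^ 2) * (lam * ‖H (lam * r)‖ ^ 2)
          ≤ (1 - (ν / (lam * r)) ^ 2) * (lam * r * ‖H (lam * r)‖ ^ 2) := by
            gcongr
            · linarith
            · exact le_mul_of_one_le_right hlam.le hr
        _ ≤ 4 / π := hH.one_sub_sq_mul_norm_sq_le (by positivity)
    rw [div_mul_div_comm, mul_one, le_div_iff₀ (by positivity)]
    rw [le_div_iff₀ pi_pos] at hscaled
    linarith
  rw [← mul_assoc, ← setIntegral_Icc_one_const hh]
  exact setIntegral_mono_on (hH.integrableOn_norm_sq hlam)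
    (integrableOn_const (by simp)) measurableSet_Icc hpoint

lemma le_setIntegral_norm_sq (hH : IsHankel ν H) (hlam : 1 ≤ lam) (hν : |ν / lam| ≤ 1)
    (hh : 0 ≤ h) :
    4 / (5 * (1 + h)) * (1 / (π * lam) * h) ≤
      ∫ r in Set.Icc 1 (1 + h), ‖H (lam * r)‖ ^ 2 := by
  have hlam₀ : 0 < lam := zero_lt_one.trans_le hlam
  have hpoint : ∀ r ∈ Set.Icc 1 (1 + h),
      4 / (5 * (1 + h)) * (1 / (π * lam)) ≤ ‖H (lam * r)‖ ^ 2 := by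
    intro r ⟨hr, hr'⟩
    have hz : 1 ≤ lam * r := one_le_mul_of_one_le_of_one_le hlam hr
    have hν' : |ν / (lam * r)| ≤ 1 := by
      rw [← div_div, abs_div, abs_of_nonneg (zero_le_one.trans hr)]
      exact (div_le_self (abs_nonneg _) hr).trans hν
    have hcorr : 1 / (4 * (lam * r) ^ 2) ≤ 1 / 4 :=
      one_div_le_one_div_of_le (by norm_num) (by linarith [one_le_pow₀ hz (n := 2)])
    have hscaled : 1 / π ≤ 5 / 4 * (lam * (1 + h) * ‖H (lam * r)‖ ^ 2) :=
      calc 1 / π ≤ (1 + 1 / (4 * (lam * r) ^ 2)) * (lam * r * ‖H (lam * r)‖ ^ 2) :=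
            hH.one_div_pi_le_mul_norm_sq (by positivity) hν'
        _ ≤ 5 / 4 * (lam * (1 + h) * ‖H (lam * r)‖ ^ 2) := by
            gcongr
            linarith
    rw [div_mul_div_comm, mul_one, div_le_iff₀ (by positivity)]
    rw [div_le_iff₀ pi_pos] at hscaled
    linarith
  rw [← mul_assoc, ← setIntegral_Icc_one_const hh]
  exact setIntegral_mono_on (integrableOn_const (by simp))
    (hH.integrableOn_norm_sq hlam₀) measurableSet_Icc hpoint

end IsHankel

variable {c ε : ℝ}

lemma le_one_sub_sq (hc : |c| ≤ 1 - ε) (hε : 0 ≤ ε) : ε ≤ 1 - c ^ 2 := by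
  nlinarith [abs_nonneg c, sq_abs c]

lemma two_mul_le_sqrt_add_sqrt (hc : |c| ≤ 1 - ε) (hε : 0 ≤ ε) (hh : 0 ≤ h) :
    2 * ε ≤ √(1 - c ^ 2 + h) + √(1 - c ^ 2) := by
  have hε_le : ε ≤ √(1 - c ^ 2) := Real.le_sqrt_of_sq_le <| by
    nlinarith [le_one_sub_sq hc hε, abs_nonneg c]
  linarith [Real.sqrt_le_sqrt (le_add_of_nonneg_right hh : 1 - c ^ 2 ≤ 1 - c ^ 2 + h)]

lemma sqrt_add_sqrt_le_three (hh : h ≤ 1) : √(1 - c ^ 2 + h) + √(1 - c ^ 2) ≤ 3 := by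
  have hsqrt₂ : √(1 - c ^ 2 + h) ≤ 2 := Real.sqrt_le_iff.2 ⟨by norm_num, by nlinarith⟩
  have hsqrt₁ : √(1 - c ^ 2) ≤ 1 := Real.sqrt_le_one.2 (by nlinarith)
  linarith

namespace IsHankel

lemma setIntegral_norm_sq_le_of_abs_le (hH : IsHankel ν H) (hlam : 0 < lam) (hε : 0 < ε)
    (hν : |ν / lam| ≤ 1 - ε) (hh : 0 ≤ h) :
    ∫ r in Set.Icc 1 (1 + h), ‖H (lam * r)‖ ^ 2 ≤ 4 / ε * (1 / (π * lam) * h) := by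
  refine (hH.setIntegral_norm_sq_le hlam (hν.trans_lt (by linarith)) hh).trans ?_
  gcongr
  exact le_one_sub_sq hν hε.le

lemma setIntegral_norm_sq_le_div_sqrt_add_sqrt (hH : IsHankel ν H) (hlam : 0 < lam) (hε : 0 < ε)
    (hν : |ν / lam| ≤ 1 - ε) (hh : 0 ≤ h) (hh₁ : h ≤ 1) :
    ∫ r in Set.Icc 1 (1 + h), ‖H (lam * r)‖ ^ 2 ≤
      12 / ε * (1 / (π * lam) * h / (√(1 - (ν / lam) ^ 2 + h) + √(1 - (ν / lam) ^ 2))) := by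
  have hD : 0 < √(1 - (ν / lam) ^ 2 + h) + √(1 - (ν / lam) ^ 2) := by
    linarith [two_mul_le_sqrt_add_sqrt hν hε.le hh]
  calc ∫ r in Set.Icc 1 (1 + h), ‖H (lam * r)‖ ^ 2
      ≤ 4 / ε * (1 / (π * lam) * h) := hH.setIntegral_norm_sq_le_of_abs_le hlam hε hν hh
    _ = 12 / ε * (1 / (π * lam) * h / 3) := by ring
    _ ≤ 12 / ε * (1 / (π * lam) * h / (√(1 - (ν / lam) ^ 2 + h) + √(1 - (ν / lam) ^ 2))) := by
        gcongr
        exact sqrt_add_sqrt_le_three hh₁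

lemma div_sqrt_add_sqrt_le_setIntegral_norm_sq (hH : IsHankel ν H) (hlam : 1 ≤ lam) (hε : 0 < ε)
    (hν : |ν / lam| ≤ 1 - ε) (hh : 0 ≤ h) (hh₁ : h ≤ 1) :
    1 / (12 / ε) *
        (1 / (π * lam) * h / (√(1 - (ν / lam) ^ 2 + h) + √(1 - (ν / lam) ^ 2))) ≤
      ∫ r in Set.Icc 1 (1 + h), ‖H (lam * r)‖ ^ 2 :=
  calc 1 / (12 / ε) *
        (1 / (π * lam) * h / (√(1 - (ν / lam) ^ 2 + h) + √(1 - (ν / lam) ^ 2)))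
      ≤ 1 / (12 / ε) * (1 / (π * lam) * h / (2 * ε)) := by
        gcongr
        exact two_mul_le_sqrt_add_sqrt hν hε.le hh
    _ = 1 / 24 * (1 / (π * lam) * h) := by field_simp; ring
    _ ≤ 4 / (5 * (1 + h)) * (1 / (π * lam) * h) := by
        gcongr ?_ * _
        rw [div_le_div_iff₀ (by norm_num) (by positivity)]
        linarith
    _ ≤ ∫ r in Set.Icc 1 (1 + h), ‖H (lam * r)‖ ^ 2 :=
        hH.le_setIntegral_norm_sq hlam (hν.trans (by linarith)) hh

end IsHankel

end Layer

theorem hankel_layer_L2_bounds_general {ε₀ : ℝ} (hε₀ : 0 < ε₀) (hε₀_le : ε₀ ≤ 1) :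
    ∃ C ≥ (1 : ℝ),
      (∀ α : ℝ, ∀ lam > (0 : ℝ), ∀ ν : ℝ, |ν / lam| ≤ 1 - ε₀ → ∀ H : ℝ → ℂ, IsHankel ν H →
        (∫ r in Set.Icc (1 : ℝ) (1 + lam ^ (-α)), ‖H (lam * r)‖ ^ 2) ≤ C * lam ^ (-1 - α)) ∧
      (∀ α ≥ (0 : ℝ), ∀ lam ≥ (1 : ℝ), ∀ ν : ℝ, |ν / lam| ≤ 1 - ε₀ →
        ∀ H : ℝ → ℂ, IsHankel ν H →
          (1 / C) * ((1 / (π * lam)) * lam ^ (-α) /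
              (√(1 - (ν / lam) ^ 2 + lam ^ (-α)) + √(1 - (ν / lam) ^ 2)))
            ≤ (∫ r in Set.Icc (1 : ℝ) (1 + lam ^ (-α)), ‖H (lam * r)‖ ^ 2) ∧
          (∫ r in Set.Icc (1 : ℝ) (1 + lam ^ (-α)), ‖H (lam * r)‖ ^ 2)
            ≤ C * ((1 / (π * lam)) * lam ^ (-α) /
              (√(1 - (ν / lam) ^ 2 + lam ^ (-α)) + √(1 - (ν / lam) ^ 2)))) := by
  refine ⟨12 / ε₀, (one_le_div hε₀).2 (by linarith), ?_, ?_⟩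
  · intro α lam hlam ν hν H hH
    calc ∫ r in Set.Icc (1 : ℝ) (1 + lam ^ (-α)), ‖H (lam * r)‖ ^ 2
        ≤ 4 / ε₀ * (1 / (π * lam) * lam ^ (-α)) :=
          hH.setIntegral_norm_sq_le_of_abs_le hlam hε₀ hν (by positivity)
      _ ≤ 12 / ε₀ * (1 / (1 * lam) * lam ^ (-α)) := by
          gcongr
          · norm_num
          · linarith [pi_gt_three]
      _ = 12 / ε₀ * lam ^ (-1 - α) := by
          rw [sub_eq_add_neg, Real.rpow_add hlam, Real.rpow_neg_one, one_mul, one_div]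
  · intro α hα lam hlam ν hν H hH
    have hlam₀ : 0 < lam := zero_lt_one.trans_le hlam
    have hwidth : lam ^ (-α) ≤ 1 := Real.rpow_le_one_of_one_le_of_nonpos hlam (neg_nonpos.2 hα)
    exact ⟨hH.div_sqrt_add_sqrt_le_setIntegral_norm_sq hlam hε₀ hν (by positivity) hwidth,
      hH.setIntegral_norm_sq_le_div_sqrt_add_sqrt hlam₀ hε₀ hν (by positivity) hwidth⟩

/-- **L² bounds for Hankel functions in a boundary layer.** Let `0 ≤ α < 2/3`.
If `ν/λ ≪ 1` then `∫_1^{1+λ^{-α}} |H_ν(λr)|² dr ≲ λ^{-1-α}`; and if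
`ε₀ ≤ c := ν/λ ≤ 1 - ε₀` for some fixed `ε₀ ∈ (0,1)` then
`∫_1^{1+λ^{-α}} |H_ν(λr)|² dr ≃ (1/(πλ)) λ^{-α}/((1-c²+λ^{-α})^{1/2} + (1-c²)^{1/2})`,
uniformly in `ν` and `λ`. -/
theorem hankel_layer_L2_bounds (α : ℝ) (hα0 : 0 ≤ α) (hα : α < 2/3) :
    (∃ δ > 0, ∃ C > 0, ∀ lam ≥ (1:ℝ), ∀ ν : ℝ, 0 ≤ ν → ν / lam ≤ δ →
      ∀ H : ℝ → ℂ, IsHankel ν H →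
        (∫ r in Set.Icc (1:ℝ) (1 + lam ^ (-α)), ‖H (lam * r)‖ ^ 2)
          ≤ C * lam ^ (-1 - α))
    ∧
    (∀ ε₀ : ℝ, 0 < ε₀ → ε₀ < 1 → ∃ C ≥ (1:ℝ), ∀ lam ≥ (1:ℝ), ∀ ν : ℝ,
      ε₀ ≤ ν / lam → ν / lam ≤ 1 - ε₀ →
      ∀ H : ℝ → ℂ, IsHankel ν H →
        (1/C) * ((1 / (π * lam)) * lam ^ (-α) /
            (Real.sqrt (1 - (ν/lam)^2 + lam ^ (-α)) + Real.sqrt (1 - (ν/lam)^2)))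
          ≤ (∫ r in Set.Icc (1:ℝ) (1 + lam ^ (-α)), ‖H (lam * r)‖ ^ 2) ∧
        (∫ r in Set.Icc (1:ℝ) (1 + lam ^ (-α)), ‖H (lam * r)‖ ^ 2)
          ≤ C * ((1 / (π * lam)) * lam ^ (-α) /
            (Real.sqrt (1 - (ν/lam)^2 + lam ^ (-α)) + Real.sqrt (1 - (ν/lam)^2)))) := by
  refine ⟨?_, fun ε₀ hε₀ hε₀_lt => ?_⟩
  · obtain ⟨C, hC, hupper, -⟩ := hankel_layer_L2_bounds_general one_half_pos one_half_lt_one.le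
    refine ⟨1 / 2, one_half_pos, C, one_pos.trans_le hC, fun lam hlam ν hν hδ => ?_⟩
    refine hupper α lam (by linarith) ν ?_
    rw [abs_of_nonneg (by positivity)]
    linarith
  · obtain ⟨C, hC, -, hprofile⟩ := hankel_layer_L2_bounds_general hε₀ hε₀_lt.le
    exact ⟨C, hC, fun lam hlam ν hν hν' =>
      hprofile α hα0 lam hlam ν (abs_le.2 ⟨by linarith, hν'⟩)⟩
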